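/- arXiv:0706.4238 — 4 statements merged into one kernel-verified Lean document; each statement's English description precedes it below -/
import Mathlib

section
/- Let k be real with |k| < 1 and ε real, and define θ(α) = α + arctan( k·sin(α − ε) / (1 − k·cos(α − ε)) ). Then for every real α, θ is differentiable at α with derivative θ'(α) = (1 − k·cos(α − ε)) / (1 + k² − 2k·cos(α − ε)); that is, dθ/dα equals the ex-centric derivative function Dex α. -/
open Real

/-!
The point with coordinates `x = 1 - k * cos (α - ε)` and `y = k * sin (α - ε)` satisfies `x' = y`
and `y' = 1 - x`. The arctangent of `y / x` therefore has derivative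
`(x * y' - y * x') / (x ^ 2 + y ^ 2) = x / (x ^ 2 + y ^ 2) - 1`, and the summand `α` cancels
the `-1`.
-/

theorem hasDerivAt_arctan_div {x y : ℝ → ℝ} {x' y' a : ℝ} (hx : HasDerivAt x x' a)
    (hy : HasDerivAt y y' a) (hxa : x a ≠ 0) :
    HasDerivAt (fun t => arctan (y t / x t))
      ((x a * y' - y a * x') / (x a ^ 2 + y a ^ 2)) a := by
  have hnorm : x a ^ 2 + y a ^ 2 ≠ 0 := by positivity
  refine (hy.fun_div hx hxa).arctan.congr_deriv ?_
  field_simp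

theorem one_sub_mul_cos_sq_add_mul_sin_sq (k t : ℝ) :
    (1 - k * cos t) ^ 2 + (k * sin t) ^ 2 = 1 + k ^ 2 - 2 * k * cos t := by
  linear_combination k ^ 2 * sin_sq_add_cos_sq t

theorem mul_cos_lt_one {k : ℝ} (hk : |k| < 1) (t : ℝ) : k * cos t < 1 :=
  calc
    k * cos t ≤ |k * cos t| := le_abs_self _
    _ = |k| * |cos t| := abs_mul _ _
    _ ≤ |k| := mul_le_of_le_one_right (abs_nonneg k) (abs_cos_le_one t)
    _ < 1 := hk

theorem theta_hasDerivAt_Dex_general {k ε α : ℝ} (h : k * cos (α - ε) ≠ 1) :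
    HasDerivAt (fun α => α + arctan (k * sin (α - ε) / (1 - k * cos (α - ε))))
      ((1 - k * cos (α - ε)) / (1 + k ^ 2 - 2 * k * cos (α - ε))) α := by
  have hx₀ : 1 - k * cos (α - ε) ≠ 0 := sub_ne_zero.mpr h.symm
  have ht : HasDerivAt (fun α => α - ε) 1 α := (hasDerivAt_id' α).sub_const ε
  have hx : HasDerivAt (fun α => 1 - k * cos (α - ε)) (k * sin (α - ε)) α := by
    simpa using (ht.cos.const_mul k).const_sub 1
  have hy : HasDerivAt (fun α => k * sin (α - ε)) (k * cos (α - ε)) α := by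
    simpa using ht.sin.const_mul k
  refine ((hasDerivAt_id' α).fun_add (hasDerivAt_arctan_div hx hy hx₀)).congr_deriv ?_
  have hnorm : (1 - k * cos (α - ε)) ^ 2 + (k * sin (α - ε)) ^ 2 ≠ 0 := by positivity
  rw [← one_sub_mul_cos_sq_add_mul_sin_sq, one_add_div hnorm]
  ring

theorem theta_hasDerivAt_Dex (k ε : ℝ) (hk : |k| < 1) (α : ℝ) :
    HasDerivAt (fun α : ℝ =>
        α + Real.arctan (k * Real.sin (α - ε) / (1 - k * Real.cos (α - ε))))
      ((1 - k * Real.cos (α - ε)) / (1 + k ^ 2 - 2 * k * Real.cos (α - ε))) α :=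
  theta_hasDerivAt_Dex_general (mul_cos_lt_one hk (α - ε)).ne
end

section
/- For any real k with |k| < 1 and any real ε, ∫_0^{2π} (1 − k·cos(α − ε)) / (1 + k² − 2k·cos(α − ε)) dα = 2π. -/
open Real

/-!
The integrand is the real part of `1 / (1 - z)` at the point `z = k * exp (i (α - ε))`. This
function is harmonic away from `z = 1`, so for `|k| < 1` its mean over the circle of radius `k`
about `0` is its value `1` at the centre; rotating the circle by `-ε` does not change the mean.
-/

theorem normSq_one_sub_circleMap_zero (r θ : ℝ) :
    Complex.normSq (1 - circleMap 0 r θ) = 1 + r ^ 2 - 2 * r * cos θ := by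
  simp only [Complex.normSq_apply, Complex.sub_re, Complex.sub_im, Complex.one_re, Complex.one_im,
    circleMap_zero_re, circleMap_zero_im]
  linear_combination r ^ 2 * sin_sq_add_cos_sq θ

theorem re_inv_one_sub_circleMap_zero (r θ : ℝ) :
    (1 - circleMap 0 r θ)⁻¹.re = (1 - r * cos θ) / (1 + r ^ 2 - 2 * r * cos θ) := by
  rw [Complex.inv_re, normSq_one_sub_circleMap_zero, Complex.sub_re, Complex.one_re,
    circleMap_zero_re]

theorem harmonicOnNhd_re_inv_one_sub :
    InnerProductSpace.HarmonicOnNhd (fun z : ℂ ↦ (1 - z)⁻¹.re) {1}ᶜ := fun _ hz ↦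
  ((analyticAt_const.sub analyticAt_id).inv (sub_ne_zero.mpr (Ne.symm hz))).harmonicAt_re

theorem circleAverage_re_inv_one_sub {r : ℝ} (hr : |r| < 1) :
    circleAverage (fun z : ℂ ↦ (1 - z)⁻¹.re) 0 r = 1 := by
  have closedBall_subset : Metric.closedBall (0 : ℂ) |r| ⊆ {1}ᶜ := by simpa using hr
  simpa using (harmonicOnNhd_re_inv_one_sub.mono closedBall_subset).circleAverage_eq

theorem integral_comp_circleMap_sub {E : Type*} [NormedAddCommGroup E] [NormedSpace ℝ E]
    (f : ℂ → E) (c : ℂ) (r φ : ℝ) :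
    ∫ θ in (0 : ℝ)..(2 * π), f (circleMap c r (θ - φ)) = (2 * π) • circleAverage f c r := by
  simp only [circleAverage_eq_integral_add (-φ), ← sub_eq_add_neg,
    smul_inv_smul₀ two_pi_pos.ne']

theorem integral_Dex_lt_one (k ε : ℝ) (hk : |k| < 1) :
    ∫ α in (0:ℝ)..(2 * π),
      (1 - k * Real.cos (α - ε)) / (1 + k ^ 2 - 2 * k * Real.cos (α - ε)) = 2 * π := by
  simp only [← re_inv_one_sub_circleMap_zero]
  rw [integral_comp_circleMap_sub (fun z ↦ (1 - z)⁻¹.re), circleAverage_re_inv_one_sub hk,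
    smul_eq_mul, mul_one]
end

section
/- For any real k with |k| > 1 and any real ε, ∫_0^{2π} (1 − k·cos(α − ε)) / (1 + k² − 2k·cos(α − ε)) dα = 0. -/
open Real

/-!
On the unit circle `z = exp (iα)`, with `a = k exp (iε)`, the integrand is the real part of
`z / (z - a)`. For `|k| > 1` the pole `a` lies outside the closed unit disc, so this real part is
harmonic there, and its average over the circle is its value at the centre, namely `0`.
-/

theorem circleAverage_re_sub_div_sub_eq_zero {c a : ℂ} {R : ℝ}
    (ha : a ∉ Metric.closedBall c |R|) :
    circleAverage (fun z ↦ ((z - c) / (z - a)).re) c R = 0 := by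
  have h_harmonic : InnerProductSpace.HarmonicOnNhd (fun z ↦ ((z - c) / (z - a)).re)
      (Metric.closedBall c |R|) := by
    intro z hz
    have hza : z - a ≠ 0 := sub_ne_zero.mpr (ne_of_mem_of_not_mem hz ha)
    have h_analytic : AnalyticAt ℂ (fun z ↦ (z - c) / (z - a)) z := by fun_prop (disch := exact hza)
    exact h_analytic.harmonicAt_re
  simpa using h_harmonic.circleAverage_eq

theorem re_mul_conj_circleMap_zero (r ρ θ φ : ℝ) :
    (circleMap 0 r θ * starRingEnd ℂ (circleMap 0 ρ φ)).re = r * ρ * cos (θ - φ) := by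
  rw [conj_circleMap_zero, circleMap_zero_mul, circleMap_zero_re, sub_eq_add_neg]

theorem normSq_circleMap_zero_sub (r ρ θ φ : ℝ) :
    Complex.normSq (circleMap 0 r θ - circleMap 0 ρ φ) =
      r ^ 2 + ρ ^ 2 - 2 * r * ρ * cos (θ - φ) := by
  rw [Complex.normSq_sub, re_mul_conj_circleMap_zero, Complex.normSq_eq_norm_sq,
    Complex.normSq_eq_norm_sq, norm_circleMap_zero, norm_circleMap_zero, sq_abs, sq_abs]
  ring

theorem re_circleMap_zero_div_sub (r ρ θ φ : ℝ) :
    (circleMap 0 r θ / (circleMap 0 r θ - circleMap 0 ρ φ)).re =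
      (r ^ 2 - r * ρ * cos (θ - φ)) / (r ^ 2 + ρ ^ 2 - 2 * r * ρ * cos (θ - φ)) := by
  have re_div_eq (z w : ℂ) : (z / w).re = (z * starRingEnd ℂ w).re / Complex.normSq w := by
    rw [div_eq_mul_inv, Complex.inv_def, ← mul_assoc, Complex.re_mul_ofReal, div_eq_mul_inv]
  rw [re_div_eq, normSq_circleMap_zero_sub, map_sub, mul_sub, Complex.sub_re,
    re_mul_conj_circleMap_zero, re_mul_conj_circleMap_zero, sub_self, cos_zero, mul_one, sq r]

theorem integral_Dex_gt_one (k ε : ℝ) (hk : 1 < |k|) :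
    ∫ α in (0:ℝ)..(2 * π),
      (1 - k * Real.cos (α - ε)) / (1 + k ^ 2 - 2 * k * Real.cos (α - ε)) = 0 := by
  have h_pole : circleMap 0 k ε ∉ Metric.closedBall (0 : ℂ) |1| := by simpa using hk
  have h_average := circleAverage_re_sub_div_sub_eq_zero h_pole
  simpa [circleAverage_def, re_circleMap_zero_div_sub, pi_ne_zero] using h_average
end

section
/- Let R and r be real numbers with R > 0 and 0 ≤ r < R, and let ε be real. Then ∫_0^{2π} (R − r·cos(α − ε)) / (R² + r² − 2Rr·cos(α − ε)) dα = 2π/R. -/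
/-!
Writing `z = r * exp (i (α - ε))`, the integrand is the real part of `(R - z)⁻¹`. This function is
holomorphic on the disc `|z| ≤ |r| < |R|`, so by the mean value property its average over the circle
`|z| = |r|` is its value `R⁻¹` at the centre.
-/

open Real

theorem circleAverage_re_inv_const_sub {w c : ℂ} {r : ℝ} (hr : |r| < ‖w - c‖) :
    circleAverage (fun z ↦ (w - z)⁻¹.re) c r = (w - c)⁻¹.re := by
  refine InnerProductSpace.HarmonicOnNhd.circleAverage_eq fun z hz ↦ AnalyticAt.harmonicAt_re ?_
  have hwz : w ≠ z := by
    rintro rfl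
    exact (mem_closedBall_iff_norm.1 hz).not_gt hr
  exact (analyticAt_const.sub analyticAt_id).inv (sub_ne_zero.2 hwz)

theorem normSq_ofReal_sub_circleMap_zero (R r θ : ℝ) :
    Complex.normSq (R - circleMap 0 r θ) = R ^ 2 + r ^ 2 - 2 * R * r * cos θ := by
  simp only [Complex.normSq_apply, Complex.sub_re, Complex.sub_im, Complex.ofReal_re,
    Complex.ofReal_im, circleMap_zero_re, circleMap_zero_im]
  linear_combination r ^ 2 * sin_sq_add_cos_sq θ

theorem re_inv_ofReal_sub_circleMap_zero (R r θ : ℝ) :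
    ((R - circleMap 0 r θ)⁻¹).re =
      (R - r * cos θ) / (R ^ 2 + r ^ 2 - 2 * R * r * cos θ) := by
  rw [Complex.inv_re, normSq_ofReal_sub_circleMap_zero, Complex.sub_re, Complex.ofReal_re,
    circleMap_zero_re]

theorem integral_I1_general_general (R r ε : ℝ) (hrR : |r| < |R|) :
    ∫ α in (0:ℝ)..(2 * π),
      (R - r * Real.cos (α - ε)) / (R ^ 2 + r ^ 2 - 2 * R * r * Real.cos (α - ε)) =
      2 * π / R := by
  have mean_value : circleAverage (fun z : ℂ ↦ (R - z)⁻¹.re) 0 r = R⁻¹ := by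
    rw [circleAverage_re_inv_const_sub (by simpa using hrR), sub_zero, ← Complex.ofReal_inv,
      Complex.ofReal_re]
  rw [circleAverage_eq_integral_add (-ε), smul_eq_mul,
    inv_mul_eq_iff_eq_mul₀ two_pi_pos.ne'] at mean_value
  simpa only [re_inv_ofReal_sub_circleMap_zero, ← sub_eq_add_neg, ← div_eq_mul_inv]
    using mean_value

theorem integral_I1_general (R r ε : ℝ) (hR : 0 < R) (hr : 0 ≤ r) (hrR : r < R) :
    ∫ α in (0:ℝ)..(2 * π),
      (R - r * Real.cos (α - ε)) / (R ^ 2 + r ^ 2 - 2 * R * r * Real.cos (α - ε)) =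
      2 * π / R :=
  integral_I1_general_general R r ε (by rwa [abs_of_nonneg hr, abs_of_pos hR])
end
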